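/- Let b₄⁺ ∈ [1/2, 1) be the root of the fourth Bernoulli polynomial B₄ in that interval, and suppose b₄⁺ ≤ a ≤ 1. Then ζ(σ, a) > 0 for every real σ with −3 < σ < −2. -/

import Mathlib

open HurwitzZeta Polynomial Set

/-- The `n`-th Bernoulli polynomial evaluated at a real number. -/
noncomputable def bernoulliPoly (n : ℕ) (x : ℝ) : ℝ := Polynomial.aeval x (Polynomial.bernoulli n)

/-!
By the functional equation, `ζ(1 - s, a)` is a positive multiple of
`cos (πs/2) C(s) + sin (πs/2) S(s)`, where `C(s) = ∑ cos (2πan) / n ^ s` and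
`S(s) = ∑ sin (2πan) / n ^ s`. For `3 < s < 4` the cosine factor is positive, the sine factor is
negative, and both series are controlled by their first terms: `S(s) ≤ sin (2πa) / 3 ≤ 0`, and
`C(s) > 0` as soon as `cos (2πa) ≥ 1/3`, which settles that case. When `cos (2πa) < 1/3`, the value
`C(4) = -π⁴ B₄(a) / 3 ≥ 0` still gives `C(s) ≥ -(4 - s) / 3`, and `B₄(a) ≤ 0` forces `a > 3/4`, so
that `sin (2πa)` is close to `-1`. The sine term then wins, because
`-sin (πs/2) > (π(4 - s)/2) cos (πs/2)`.
-/

section Real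

open Real

lemma abs_sin_mul_natCast_le (x : ℝ) (n : ℕ) : |sin (x * n)| ≤ n * |sin x| := by
  induction n with
  | zero => simp
  | succ n ih =>
    calc |sin (x * (n + 1 : ℕ))|
        = |sin (x * n) * cos x + cos (x * n) * sin x| := by
          rw [← sin_add]; push_cast; ring_nf
      _ ≤ |sin (x * n)| * |cos x| + |cos (x * n)| * |sin x| := by
          simpa only [abs_mul] using abs_add_le (sin (x * n) * cos x) (cos (x * n) * sin x)
      _ ≤ |sin (x * n)| * 1 + 1 * |sin x| := by
          gcongr <;> exact abs_cos_le_one _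
      _ ≤ (n + 1 : ℕ) * |sin x| := by
          push_cast; linarith

lemma abs_one_div_rpow_sub_one_div_rpow_le {x p q : ℝ} (hx : 1 ≤ x) (hpq : p ≤ q)
    (hqp : q ≤ p + 1) : |1 / x ^ p - 1 / x ^ q| ≤ (q - p) / x ^ (q - 1) := by
  have hx0 : 0 < x := by linarith
  have bernoulli_ineq : x ^ (q - p) ≤ 1 + (q - p) * (x - 1) := by
    simpa using rpow_one_add_le_one_add_mul_self (s := x - 1) (by linarith)
      (sub_nonneg.2 hpq) (by linarith)
  have one_le : 1 ≤ x ^ (q - p) := one_le_rpow hx (sub_nonneg.2 hpq)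
  calc |1 / x ^ p - 1 / x ^ q| = |(x ^ (q - p) - 1) / x ^ q| := by
        rw [rpow_sub hx0]; field_simp
    _ = (x ^ (q - p) - 1) / x ^ q := abs_of_nonneg (by have := sub_nonneg.2 one_le; positivity)
    _ ≤ (q - p) * x / x ^ q := by gcongr; linarith
    _ = (q - p) / x ^ (q - 1) := by rw [rpow_sub_one hx0.ne']; field_simp

lemma two_mul_natCast_sq_le_rpow {n : ℕ} (hn : 2 ≤ n) {s : ℝ} (hs : 3 ≤ s) :
    2 * (n : ℝ) ^ 2 ≤ (n : ℝ) ^ s := by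
  have hn' : (2 : ℝ) ≤ n := by exact_mod_cast hn
  calc 2 * (n : ℝ) ^ 2 ≤ n * (n : ℝ) ^ 2 := by gcongr
    _ = (n : ℝ) ^ (3 : ℝ) := by norm_cast; ring
    _ ≤ (n : ℝ) ^ s := rpow_le_rpow_of_exponent_le (by linarith) hs

lemma norm_sub_le_of_hasSum_of_norm_le_div_sq {E : Type*} [SeminormedAddCommGroup E] {f : ℕ → E}
    {L : E} {K : ℝ} (hf : HasSum f L) (hf0 : f 0 = 0) (hK : ∀ n ≥ 2, ‖f n‖ ≤ K / n ^ 2) :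
    ‖L - f 1‖ ≤ K * (π ^ 2 / 6 - 1) := by
  have tail_f : HasSum (fun n ↦ f (n + 2)) (L - f 1) := by
    simpa [Finset.sum_range_succ, hf0] using (hasSum_nat_add_iff' 2).2 hf
  have tail_zeta : HasSum (fun n : ℕ ↦ 1 / ((n + 2 : ℕ) : ℝ) ^ 2) (π ^ 2 / 6 - 1) := by
    simpa [Finset.sum_range_succ] using (hasSum_nat_add_iff' 2).2 hasSum_zeta_two
  refine tail_f.norm_le_of_bounded (tail_zeta.mul_left K) fun n ↦ ?_
  simpa only [mul_one_div] using hK (n + 2) (by omega)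

lemma pi_sq_div_six_sub_one_lt_two_thirds : π ^ 2 / 6 - 1 < 2 / 3 := by
  nlinarith [pi_lt_d2, pi_pos]

end Real

section BernoulliFour

lemma bernoulliPoly_four (x : ℝ) : bernoulliPoly 4 x = (x * (1 - x)) ^ 2 - 1 / 30 := by
  have b3 : _root_.bernoulli 3 = 0 := by
    rw [bernoulli_eq_bernoulli'_of_ne_one (by decide), bernoulli'_three]
  have b4 : _root_.bernoulli 4 = -1 / 30 := by
    rw [bernoulli_eq_bernoulli'_of_ne_one (by decide), bernoulli'_four]
  simp only [bernoulliPoly, Polynomial.bernoulli, Finset.sum_range_succ, Finset.sum_range_zero,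
    map_add, map_zero, aeval_monomial, _root_.bernoulli_zero, _root_.bernoulli_one, bernoulli_two,
    b3, b4, eq_ratCast]
  norm_num [Nat.choose]
  ring

lemma antitoneOn_bernoulliPoly_four : AntitoneOn (bernoulliPoly 4) (Icc (1 / 2) 1) := by
  rintro x ⟨hx, -⟩ y ⟨-, hy⟩ hxy
  have nonneg : 0 ≤ y * (1 - y) := mul_nonneg (by linarith) (by linarith)
  have le : y * (1 - y) ≤ x * (1 - x) := by nlinarith
  rw [bernoulliPoly_four, bernoulliPoly_four]
  gcongr

lemma three_fourths_lt_of_bernoulliPoly_four_nonpos {a : ℝ} (ha : 1 / 2 ≤ a)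
    (hB : bernoulliPoly 4 a ≤ 0) : 3 / 4 < a := by
  by_contra! h
  have anti : bernoulliPoly 4 (3 / 4) ≤ bernoulliPoly 4 a :=
    antitoneOn_bernoulliPoly_four ⟨ha, by linarith⟩ (by norm_num) h
  have pos : 0 < bernoulliPoly 4 (3 / 4) := by rw [bernoulliPoly_four]; norm_num
  linarith

end BernoulliFour

section PeriodicZeta

open Real

lemma im_eq_zero_of_hasSum_ofReal_div_natCast_cpow {c : ℕ → ℝ} {s : ℝ} {L : ℂ}
    (h : HasSum (fun n : ℕ ↦ (c n : ℂ) / (n : ℂ) ^ (s : ℂ)) L) : L.im = 0 := by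
  have real_terms (n : ℕ) : (c n : ℂ) / (n : ℂ) ^ (s : ℂ) = ((c n / (n : ℝ) ^ s : ℝ) : ℂ) := by
    rw [Complex.ofReal_div, Complex.ofReal_cpow n.cast_nonneg, Complex.ofReal_natCast]
  simp only [real_terms] at h
  exact (Complex.hasSum_im h).unique (by simpa only [Complex.ofReal_im] using hasSum_zero)

lemma cosZeta_ofReal_im (a : ℝ) {s : ℝ} (hs : 1 < s) : (cosZeta a s).im = 0 :=
  im_eq_zero_of_hasSum_ofReal_div_natCast_cpow (hasSum_nat_cosZeta a (by simpa using hs))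

lemma sinZeta_ofReal_im (a : ℝ) {s : ℝ} (hs : 1 < s) : (sinZeta a s).im = 0 :=
  im_eq_zero_of_hasSum_ofReal_div_natCast_cpow (hasSum_nat_sinZeta a (by simpa using hs))

lemma hurwitzZeta_one_sub_ofReal (a : ℝ) {s : ℝ} (hs : 1 < s) :
    hurwitzZeta a ((1 - s : ℝ) : ℂ) =
      ((2 * (2 * π) ^ (-s) * Gamma s *
        (cos (π * s / 2) * (cosZeta a s).re + sin (π * s / 2) * (sinZeta a s).re) : ℝ) : ℂ) := by
  have ne_neg_nat (n : ℕ) : (s : ℂ) ≠ -n := fun h ↦ by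
    have s_eq : s = -n := by exact_mod_cast h
    linarith [n.cast_nonneg (α := ℝ)]
  have ne_one : (s : ℂ) ≠ 1 := by exact_mod_cast hs.ne'
  have cosZeta_eq : ((cosZeta a s).re : ℂ) = cosZeta a s :=
    Complex.ext rfl (cosZeta_ofReal_im a hs).symm
  have sinZeta_eq : ((sinZeta a s).re : ℂ) = sinZeta a s :=
    Complex.ext rfl (sinZeta_ofReal_im a hs).symm
  rw [Complex.ofReal_sub, Complex.ofReal_one, hurwitzZeta,
    hurwitzZetaEven_one_sub _ ne_neg_nat (Or.inr ne_one), hurwitzZetaOdd_one_sub _ ne_neg_nat,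
    Complex.Gamma_ofReal]
  push_cast [Complex.ofReal_cpow two_pi_pos.le, cosZeta_eq, sinZeta_eq]
  ring

lemma norm_cosZeta_sub_cos_le (a : ℝ) {s : ℂ} (hs : 3 ≤ s.re) :
    ‖cosZeta a s - cos (2 * π * a)‖ ≤ 1 / 2 * (π ^ 2 / 6 - 1) := by
  have hs0 : s ≠ 0 := by rintro rfl; norm_num at hs
  have term_le (n : ℕ) (hn : 2 ≤ n) :
      ‖(cos (2 * π * a * n) : ℂ) / (n : ℂ) ^ s‖ ≤ 1 / 2 / n ^ 2 := by
    rw [norm_div, Complex.norm_natCast_cpow_of_pos (by omega), Complex.norm_real, div_div]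
    exact div_le_div₀ zero_le_one (abs_cos_le_one _) (by positivity)
      (two_mul_natCast_sq_le_rpow hn hs)
  simpa using norm_sub_le_of_hasSum_of_norm_le_div_sq
    (hasSum_nat_cosZeta a (by linarith)) (by simp [hs0]) term_le

lemma norm_sinZeta_sub_sin_le (a : ℝ) {s : ℂ} (hs : 3 ≤ s.re) :
    ‖sinZeta a s - sin (2 * π * a)‖ ≤ |sin (2 * π * a)| * (π ^ 2 / 6 - 1) := by
  have term_le (n : ℕ) (hn : 2 ≤ n) :
      ‖(sin (2 * π * a * n) : ℂ) / (n : ℂ) ^ s‖ ≤ |sin (2 * π * a)| / n ^ 2 := by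
    have hn1 : (1 : ℝ) ≤ n := by exact_mod_cast (by omega : 1 ≤ n)
    rw [norm_div, Complex.norm_natCast_cpow_of_pos (by omega), Complex.norm_real]
    calc |sin (2 * π * a * n)| / (n : ℝ) ^ s.re
        ≤ n * |sin (2 * π * a)| / (n : ℝ) ^ (3 : ℝ) := by
          gcongr
          exact abs_sin_mul_natCast_le _ n
      _ = |sin (2 * π * a)| / n ^ 2 := by
          rw [rpow_ofNat]
          field_simp
  simpa using norm_sub_le_of_hasSum_of_norm_le_div_sq
    (hasSum_nat_sinZeta a (by linarith)) (by simp) term_le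

lemma norm_cosZeta_sub_cosZeta_le (a : ℝ) {p q : ℝ} (hq : 4 ≤ q) (hpq : p ≤ q)
    (hqp : q ≤ p + 1) :
    ‖cosZeta a p - cosZeta a q‖ ≤ (q - p) / 2 * (π ^ 2 / 6 - 1) := by
  have term_le (n : ℕ) (hn : 2 ≤ n) :
      ‖(cos (2 * π * a * n) : ℂ) / (n : ℂ) ^ (p : ℂ) - cos (2 * π * a * n) / (n : ℂ) ^ (q : ℂ)‖
        ≤ (q - p) / 2 / n ^ 2 := by
    have hn1 : (1 : ℝ) ≤ n := by exact_mod_cast (by omega : 1 ≤ n)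
    calc ‖(cos (2 * π * a * n) : ℂ) / (n : ℂ) ^ (p : ℂ)
            - cos (2 * π * a * n) / (n : ℂ) ^ (q : ℂ)‖
        = |cos (2 * π * a * n)| * |1 / (n : ℝ) ^ p - 1 / (n : ℝ) ^ q| := by
          rw [← abs_mul, ← Real.norm_eq_abs, ← Complex.norm_real]
          push_cast [Complex.ofReal_cpow n.cast_nonneg]
          ring_nf
      _ ≤ 1 * ((q - p) / (n : ℝ) ^ (q - 1)) := by
          gcongr
          · exact abs_cos_le_one _
          · exact abs_one_div_rpow_sub_one_div_rpow_le hn1 hpq hqp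
      _ ≤ (q - p) / (2 * n ^ 2) := by
          rw [one_mul]
          have := sub_nonneg.2 hpq
          gcongr
          exact two_mul_natCast_sq_le_rpow hn (by linarith)
      _ = (q - p) / 2 / n ^ 2 := by field_simp
  have hp0 : p ≠ 0 := by linarith
  have hq0 : q ≠ 0 := by linarith
  have hasSum_p := hasSum_nat_cosZeta a (s := p) (by rw [Complex.ofReal_re]; linarith)
  have hasSum_q := hasSum_nat_cosZeta a (s := q) (by rw [Complex.ofReal_re]; linarith)
  simpa using norm_sub_le_of_hasSum_of_norm_le_div_sq (hasSum_p.sub hasSum_q)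
    (by simp [hp0, hq0]) term_le

lemma cosZeta_four {a : ℝ} (ha : a ∈ Icc (0 : ℝ) 1) :
    cosZeta a 4 = ((-(π ^ 4 / 3 * bernoulliPoly 4 a) : ℝ) : ℂ) := by
  have eval_eq : ((Polynomial.bernoulli (2 * 2)).map (algebraMap ℚ ℂ)).eval (a : ℂ) =
      (bernoulliPoly 4 a : ℂ) := by
    rw [eval_map_algebraMap, bernoulliPoly, ← Complex.coe_algebraMap, aeval_algebraMap_apply]
  calc cosZeta a 4 = cosZeta a (2 * (2 : ℕ)) := by norm_num
    _ = (-1) ^ (2 + 1) * (2 * π) ^ (2 * 2) / 2 / (2 * 2).factorial * (bernoulliPoly 4 a : ℂ) := by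
        rw [cosZeta_two_mul_nat two_ne_zero ha, eval_eq]
    _ = ((-(π ^ 4 / 3 * bernoulliPoly 4 a) : ℝ) : ℂ) := by
        push_cast [Nat.factorial]
        ring

end PeriodicZeta

section Positivity

open Real

lemma re_cosZeta_pos (a : ℝ) {s : ℝ} (hs : 3 ≤ s) (hcos : 1 / 3 ≤ cos (2 * π * a)) :
    0 < (cosZeta a s).re := by
  have bound := (Complex.abs_re_le_norm _).trans
    (norm_cosZeta_sub_cos_le a (s := s) (by rwa [Complex.ofReal_re]))
  rw [Complex.sub_re, Complex.ofReal_re] at bound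
  linarith [(abs_le.1 bound).1, pi_sq_div_six_sub_one_lt_two_thirds]

lemma re_sinZeta_le (a : ℝ) {s : ℝ} (hs : 3 ≤ s) (hsin : sin (2 * π * a) ≤ 0) :
    (sinZeta a s).re ≤ sin (2 * π * a) / 3 := by
  have bound := (Complex.abs_re_le_norm _).trans
    (norm_sinZeta_sub_sin_le a (s := s) (by rwa [Complex.ofReal_re]))
  rw [Complex.sub_re, Complex.ofReal_re, abs_of_nonpos hsin] at bound
  nlinarith [(abs_le.1 bound).2, pi_sq_div_six_sub_one_lt_two_thirds]

lemma le_re_cosZeta_of_bernoulliPoly_four_nonpos {a : ℝ} (ha : a ∈ Icc (0 : ℝ) 1)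
    (hB : bernoulliPoly 4 a ≤ 0) {s : ℝ} (hs : 3 ≤ s) (hs' : s ≤ 4) :
    -((4 - s) / 3) ≤ (cosZeta a s).re := by
  have bound := (Complex.abs_re_le_norm _).trans
    (norm_cosZeta_sub_cosZeta_le a le_rfl hs' (by linarith))
  rw [Complex.sub_re, Complex.ofReal_ofNat, cosZeta_four ha, Complex.ofReal_re] at bound
  have value_nonneg : 0 ≤ -(π ^ 4 / 3 * bernoulliPoly 4 a) :=
    neg_nonneg.2 (mul_nonpos_of_nonneg_of_nonpos (by positivity) hB)
  nlinarith [(abs_le.1 bound).1, pi_sq_div_six_sub_one_lt_two_thirds]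

lemma sin_two_pi_mul_nonpos {a : ℝ} (ha : a ∈ Icc (1 / 2 : ℝ) 1) : sin (2 * π * a) ≤ 0 := by
  rw [← sin_sub_two_pi]
  exact sin_nonpos_of_nonpos_of_neg_pi_le (by nlinarith [ha.2, pi_pos])
    (by nlinarith [ha.1, pi_pos])

lemma sin_two_pi_mul_le {a : ℝ} (ha : a ∈ Icc (3 / 4 : ℝ) 1) (hcos : cos (2 * π * a) ≤ 1 / 3) :
    sin (2 * π * a) ≤ -(9 / 10) := by
  have cos_nonneg : 0 ≤ cos (2 * π * a) := by
    rw [← cos_sub_two_pi]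
    exact cos_nonneg_of_neg_pi_div_two_le_of_le (by nlinarith [ha.1, pi_pos])
      (by nlinarith [ha.2, pi_pos])
  have sin_nonpos : sin (2 * π * a) ≤ 0 := sin_two_pi_mul_nonpos ⟨by linarith [ha.1], ha.2⟩
  nlinarith [sin_sq_add_cos_sq (2 * π * a)]

lemma cos_mul_sub_sin_mul_pos {δ C S : ℝ} (hδ : 0 < δ) (hδ' : δ < 1) (hC : -(δ / 3) ≤ C)
    (hS : S ≤ -(3 / 10)) : 0 < cos (π * δ / 2) * C - sin (π * δ / 2) * S := by
  have angle_pos : 0 < π * δ / 2 := by positivity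
  have angle_lt : π * δ / 2 < π / 2 := by nlinarith [pi_pos]
  have hcos : 0 < cos (π * δ / 2) := cos_pos_of_mem_Ioo ⟨by linarith, angle_lt⟩
  have hsin : π * δ / 2 * cos (π * δ / 2) < sin (π * δ / 2) := by
    rw [← lt_div_iff₀ hcos, ← tan_eq_sin_div_cos]
    exact lt_tan angle_pos angle_lt
  have sin_pos : 0 < sin (π * δ / 2) := (mul_pos angle_pos hcos).trans hsin
  calc 0 ≤ cos (π * δ / 2) * δ * (3 / 20 * π - 1 / 3) :=
        mul_nonneg (by positivity) (by linarith [pi_gt_three])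
    _ = cos (π * δ / 2) * -(δ / 3) - π * δ / 2 * cos (π * δ / 2) * -(3 / 10) := by ring
    _ < cos (π * δ / 2) * -(δ / 3) - sin (π * δ / 2) * -(3 / 10) := by linarith
    _ ≤ cos (π * δ / 2) * C - sin (π * δ / 2) * S := by gcongr

lemma cos_mul_re_cosZeta_add_sin_mul_re_sinZeta_pos {a : ℝ} (ha : a ∈ Icc (1 / 2 : ℝ) 1)
    (hB : bernoulliPoly 4 a ≤ 0) {s : ℝ} (hs : 3 < s) (hs' : s < 4) :
    0 < cos (π * s / 2) * (cosZeta a s).re + sin (π * s / 2) * (sinZeta a s).re := by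
  have hsin : sin (2 * π * a) ≤ 0 := sin_two_pi_mul_nonpos ha
  have hS := re_sinZeta_le a hs.le hsin
  rw [show π * s / 2 = 2 * π - π * (4 - s) / 2 by ring, cos_two_pi_sub, sin_two_pi_sub, neg_mul,
    ← sub_eq_add_neg]
  rcases le_total (cos (2 * π * a)) (1 / 3) with hcos | hcos
  · have ha' : a ∈ Icc (3 / 4 : ℝ) 1 :=
      ⟨(three_fourths_lt_of_bernoulliPoly_four_nonpos ha.1 hB).le, ha.2⟩
    have hC := le_re_cosZeta_of_bernoulliPoly_four_nonpos ⟨by linarith [ha.1], ha.2⟩ hB hs.le hs'.le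
    exact cos_mul_sub_sin_mul_pos (by linarith) (by linarith) hC
      (by linarith [sin_two_pi_mul_le ha' hcos])
  · have cos_pos : 0 < cos (π * (4 - s) / 2) :=
      cos_pos_of_mem_Ioo ⟨by nlinarith [pi_pos], by nlinarith [pi_pos]⟩
    have sin_pos : 0 < sin (π * (4 - s) / 2) :=
      sin_pos_of_mem_Ioo ⟨by nlinarith [pi_pos], by nlinarith [pi_pos]⟩
    have main_term_pos := mul_pos cos_pos (re_cosZeta_pos a hs.le hcos)
    have sin_term_nonpos := mul_nonpos_of_nonneg_of_nonpos sin_pos.le (hS.trans (by linarith))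
    linarith

end Positivity

/-- With `b₄⁺ ∈ [1/2,1)` the root of `B₄` in that interval and `b₄⁺ ≤ a ≤ 1`,
`ζ(σ, a) > 0` for every real `σ ∈ (-3, -2)`. -/
theorem hurwitzZeta_pos_on_Ioo_neg_three_neg_two (bp : ℝ)
    (hbp : bp ∈ Set.Ico (1 / 2 : ℝ) 1) (hbp0 : bernoulliPoly 4 bp = 0)
    (a : ℝ) (ha : bp ≤ a) (ha' : a ≤ 1) :
    ∀ σ : ℝ, -3 < σ → σ < -2 →
      (hurwitzZeta (a : UnitAddCircle) (σ : ℂ)).im = 0 ∧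
        0 < (hurwitzZeta (a : UnitAddCircle) (σ : ℂ)).re := by
  intro σ hσ hσ'
  obtain ⟨s, rfl⟩ : ∃ s : ℝ, σ = 1 - s := ⟨1 - σ, by ring⟩
  have ha_mem : a ∈ Icc (1 / 2 : ℝ) 1 := ⟨hbp.1.trans ha, ha'⟩
  have hB : bernoulliPoly 4 a ≤ 0 :=
    hbp0 ▸ antitoneOn_bernoulliPoly_four (Ico_subset_Icc_self hbp) ha_mem ha
  have pos := cos_mul_re_cosZeta_add_sin_mul_re_sinZeta_pos ha_mem hB (s := s)
    (by linarith) (by linarith)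
  rw [hurwitzZeta_one_sub_ofReal a (by linarith : 1 < s)]
  refine ⟨Complex.ofReal_im _, ?_⟩
  have Gamma_pos : 0 < Real.Gamma s := Real.Gamma_pos_of_pos (by linarith)
  rw [Complex.ofReal_re]
  positivity
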